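/- arXiv:1212.1879 — 8 statements merged into one kernel-verified Lean document; each statement's English description precedes it below -/
import Mathlib

section
/- Let T be a pretriangulated category (additive, with shift by ℤ and a class of distinguished triangles) in which all countable coproducts exist. Let S be a full subcategory of T that is closed under isomorphisms, closed under the shift functor in both directions, closed under extensions (for any distinguished triangle X → Y → Z → X[1], if X and Z lie in S then so does Y), and closed under countable coproducts (the coproduct in T of any countable family of objects of S again lies in S). Then S is closed under direct summands: if an object of T of the form X ⊕ Y lies in S, then X lies in S. -/
open CategoryTheory Limits Pretriangulated

universe v u

/-- Swindle: adding a copy of `X` to a countable coproduct of copies of `X ⊞ Y`. -/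
noncomputable def swindleIso {T : Type u} [Category.{v} T] [Preadditive T]
    [HasBinaryBiproducts T] (X Y : T) [HasCoproduct (fun _ : ℕ => X ⊞ Y)] :
    (∐ (fun _ : ℕ => X ⊞ Y)) ⊞ X ≅ ∐ (fun _ : ℕ => X ⊞ Y) where
  hom := biprod.desc
    (Sigma.desc fun n => biprod.desc
      (biprod.inl ≫ Sigma.ι (fun _ : ℕ => X ⊞ Y) (n + 1))
      (biprod.inr ≫ Sigma.ι (fun _ : ℕ => X ⊞ Y) n))
    (biprod.inl ≫ Sigma.ι (fun _ : ℕ => X ⊞ Y) 0)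
  inv := Sigma.desc fun n => biprod.desc
    (Nat.casesOn (motive := fun _ => X ⟶ (∐ (fun _ : ℕ => X ⊞ Y)) ⊞ X) n biprod.inr
      (fun m => biprod.inl ≫ Sigma.ι (fun _ : ℕ => X ⊞ Y) m ≫ biprod.inl))
    (biprod.inr ≫ Sigma.ι (fun _ : ℕ => X ⊞ Y) n ≫ biprod.inl)
  hom_inv_id := by
    apply biprod.hom_ext'
    · apply Sigma.hom_ext
      intro n
      apply biprod.hom_ext' <;> simp
    · simp
  inv_hom_id := by
    apply Sigma.hom_ext
    intro n
    apply biprod.hom_ext'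
    · cases n <;> simp
    · simp

/-- In a pretriangulated category with countable coproducts, a full subcategory (given by a
class of objects closed under isomorphisms) that is closed under shifts in both directions,
under extensions, and under countable coproducts, is closed under direct summands. -/
theorem triangulated_subcategory_closed_under_summands
    {T : Type u} [Category.{v} T] [HasZeroObject T] [Preadditive T] [HasShift T ℤ]
    [∀ n : ℤ, (CategoryTheory.shiftFunctor T n).Additive] [Pretriangulated T]
    [HasBinaryBiproducts T]
    (hcoprod : ∀ (ι : Type) [Countable ι] (f : ι → T), HasCoproduct f)
    (S : Set T)
    (hiso : ∀ ⦃X Y : T⦄, (X ≅ Y) → X ∈ S → Y ∈ S)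
    (hshift : ∀ X : T, X ∈ S → X⟦(1 : ℤ)⟧ ∈ S)
    (hshiftneg : ∀ X : T, X ∈ S → X⟦(-1 : ℤ)⟧ ∈ S)
    (hext : ∀ (Δ : Triangle T), Δ ∈ (distTriang T) → Δ.obj₁ ∈ S → Δ.obj₃ ∈ S → Δ.obj₂ ∈ S)
    (hcop : ∀ (ι : Type) [Countable ι] (f : ι → T), (∀ i, f i ∈ S) →
      haveI := hcoprod ι f; (∐ f) ∈ S)
    (X Y : T) (hXY : (X ⊞ Y) ∈ S) : X ∈ S := by
  haveI := hcoprod ℕ (fun _ => X ⊞ Y)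
  have hA : (∐ (fun _ : ℕ => X ⊞ Y)) ∈ S := hcop ℕ (fun _ => X ⊞ Y) (fun _ => hXY)
  exact hext _ (rot_of_distTriang _
    (binaryBiproductTriangle_distinguished (∐ (fun _ : ℕ => X ⊞ Y)) X))
    (hiso (swindleIso X Y).symm hA) (hshift _ hA)
end

section
/- Let R, R₁, R₂, R' be rings (associative, with identity) and let i₁ : R → R₁, i₂ : R → R₂, j₁ : R₁ → R', j₂ : R₂ → R' be ring homomorphisms such that j₁ ∘ i₁ = j₂ ∘ i₂, both j₁ and j₂ are surjective, and the square is a pullback, i.e. the map r ↦ (i₁(r), i₂(r)) is a bijection from R onto {(a, b) ∈ R₁ × R₂ : j₁(a) = j₂(b)}. Then the square is also a pushout in the category of rings: for every ring U and ring homomorphisms f₁ : R₁ → U, f₂ : R₂ → U with f₁ ∘ i₁ = f₂ ∘ i₂, there exists a unique ring homomorphism g : R' → U with g ∘ j₁ = f₁ and g ∘ j₂ = f₂. -/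
/-- A Milnor square (a pullback square of rings with surjective structure maps) is also a
pushout in the category of rings: `R'` is the coproduct `R₁ ⊔_R R₂`. -/
theorem milnor_square_is_pushout
    {R R₁ R₂ R' : Type*} [Ring R] [Ring R₁] [Ring R₂] [Ring R']
    (i₁ : R →+* R₁) (i₂ : R →+* R₂) (j₁ : R₁ →+* R') (j₂ : R₂ →+* R')
    (hcomm : ∀ r : R, j₁ (i₁ r) = j₂ (i₂ r))
    (hj₁ : Function.Surjective j₁) (hj₂ : Function.Surjective j₂)
    (hinj : Function.Injective (fun r : R => (i₁ r, i₂ r)))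
    (hrange : Set.range (fun r : R => (i₁ r, i₂ r)) = {p : R₁ × R₂ | j₁ p.1 = j₂ p.2}) :
    ∀ (U : Type*) [Ring U] (f₁ : R₁ →+* U) (f₂ : R₂ →+* U),
      f₁.comp i₁ = f₂.comp i₂ →
      ∃! g : R' →+* U, g.comp j₁ = f₁ ∧ g.comp j₂ = f₂ := by
  intro U _ f₁ f₂ hf
  have key : ∀ a b, j₁ a = j₂ b → f₁ a = f₂ b := by
    intro a b hab
    have hmem : (a, b) ∈ Set.range (fun r : R => (i₁ r, i₂ r)) := by
      rw [hrange]
      exact hab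
    obtain ⟨r, hr⟩ := hmem
    have h1 : i₁ r = a := congrArg Prod.fst hr
    have h2 : i₂ r = b := congrArg Prod.snd hr
    rw [← h1, ← h2]
    exact RingHom.congr_fun hf r
  have hker : RingHom.ker j₁ ≤ RingHom.ker f₁ := by
    intro a ha
    rw [RingHom.mem_ker] at ha ⊢
    rw [key a 0 (by rw [ha, map_zero]), map_zero]
  have hg : (j₁.liftOfSurjective hj₁ ⟨f₁, hker⟩).comp j₁ = f₁ :=
    j₁.liftOfRightInverse_comp _ (Function.rightInverse_surjInv hj₁) ⟨f₁, hker⟩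
  refine ⟨j₁.liftOfSurjective hj₁ ⟨f₁, hker⟩, ⟨hg, ?_⟩, ?_⟩
  · ext b
    obtain ⟨a, ha⟩ := hj₁ (j₂ b)
    rw [RingHom.comp_apply, ← ha, ← key a b ha]
    exact RingHom.congr_fun hg a
  · rintro g ⟨h1, -⟩
    ext x
    obtain ⟨a, rfl⟩ := hj₁ x
    exact (RingHom.congr_fun h1 a).trans (RingHom.congr_fun hg a).symm
end

section
/- Let A and B be rings, f : A → B a ring homomorphism, and Φ a multiplicatively closed subset of A (a submonoid containing 1) consisting of central elements of A each of which is a non-zero-divisor in A. Assume that for every s ∈ Φ, the element f(s) is central in B and a non-zero-divisor in B, and that f induces a bijection A/sA → B/f(s)B (that is: for every b ∈ B there exists a ∈ A with b − f(a) ∈ f(s)B, and for every a ∈ A with f(a) ∈ f(s)B one has a ∈ sA). Let λ : A → Φ⁻¹A and φ : B → f(Φ)⁻¹B be the canonical homomorphisms into the Ore localizations of A at Φ and of B at f(Φ), and let ρ : Φ⁻¹A → f(Φ)⁻¹B be the induced homomorphism with ρ(a/s) = f(a)/f(s). Then the sequence of additive abelian groups 0 → A → Φ⁻¹A ⊕ B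 → f(Φ)⁻¹B → 0 is exact, where the first map is a ↦ (λ(a), f(a)) and the second map is (x, b) ↦ ρ(x) − φ(b). -/
/-- A submonoid consisting of central elements is a (left) Ore set. -/
def oreSetOfCentral {A : Type*} [Ring A] (Φ : Submonoid A)
    (hc : ∀ s ∈ Φ, ∀ a : A, s * a = a * s) : OreLocalization.OreSet Φ where
  ore_right_cancel r₁ r₂ s h := ⟨s, by rw [hc s s.2 r₁, hc s s.2 r₂, h]⟩
  oreNum r _ := r
  oreDenom _ s := s
  ore_eq r s := hc s s.2 r

theorem karoubi_div_eq {R : Type*} [Ring R] (S : Submonoid R) [OreLocalization.OreSet S]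
    (hc : ∀ s ∈ S, ∀ a : R, s * a = a * s) (hr : ∀ s ∈ S, s ∈ nonZeroDivisors R)
    (r t : R) (s : S) : r /ₒ s = t /ₒ (1 : S) ↔ r = s * t := by
  constructor
  · intro h
    obtain ⟨u, v, h1, h2⟩ := OreLocalization.oreDiv_eq_iff.1 h
    simp only [Submonoid.smul_def, smul_eq_mul, OneMemClass.coe_one, mul_one] at h1 h2
    have h3 : (u : R) * (s * t - r) = 0 := by
      have h4 : v * (s * t - r) = 0 := by rw [mul_sub, ← mul_assoc, ← h2, h1, sub_self]
      rw [h2, mul_assoc, hc s s.2, ← mul_assoc, h4, zero_mul]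
    exact (sub_eq_zero.1 ((hr u u.2).1 _ h3)).symm
  · rintro rfl
    have := OreLocalization.expand' t (1 : S) s
    rw [this, mul_one]
    rfl

/-- Karoubi's situation: `f : A → B`, `Φ` a multiplicatively closed set of central
non-zero-divisors of `A` whose image consists of central non-zero-divisors of `B`, such that
`f` induces bijections `A/sA → B/f(s)B` for all `s ∈ Φ`.  Then, with `λ : A → Φ⁻¹A`,
`φ : B → f(Φ)⁻¹B` the canonical maps to the Ore localizations and `ρ : Φ⁻¹A → f(Φ)⁻¹B` the
induced map `a/s ↦ f(a)/f(s)`, the sequence of additive groups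
`0 → A → Φ⁻¹A ⊕ B → f(Φ)⁻¹B → 0`, with maps `a ↦ (λ a, f a)` and `(x, b) ↦ ρ x − φ b`,
is exact. -/
theorem karoubi_exact_sequence
    {A B : Type*} [Ring A] [Ring B] (f : A →+* B) (Φ : Submonoid A)
    (hcentA : ∀ s ∈ Φ, ∀ a : A, s * a = a * s)
    (hregA : ∀ s ∈ Φ, (s : A) ∈ nonZeroDivisors A)
    (hcentB : ∀ s ∈ Φ, ∀ b : B, f s * b = b * f s)
    (hregB : ∀ s ∈ Φ, f s ∈ nonZeroDivisors B)
    (hmodsurj : ∀ s ∈ Φ, ∀ b : B, ∃ a : A, ∃ b' : B, b - f a = f s * b')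
    (hmodinj : ∀ s ∈ Φ, ∀ a : A, (∃ b : B, f a = f s * b) → ∃ a' : A, a = s * a') :
    letI : OreLocalization.OreSet Φ := oreSetOfCentral Φ hcentA
    letI : OreLocalization.OreSet (Φ.map (f : A →* B)) :=
      oreSetOfCentral (Φ.map (f : A →* B))
        (by rintro t ⟨s, hs, rfl⟩ b; exact hcentB s hs b)
    ∀ ρ : OreLocalization Φ A →+* OreLocalization (Φ.map (f : A →* B)) B,
      (∀ (a : A) (s : Φ), ρ (a /ₒ s) =
        f a /ₒ (⟨f s, Submonoid.mem_map_of_mem (f : A →* B) s.2⟩ : Φ.map (f : A →* B))) →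
      (Function.Injective
          (fun a : A => ((OreLocalization.numeratorRingHom a : OreLocalization Φ A), f a)) ∧
        Function.Exact
          (fun a : A => ((OreLocalization.numeratorRingHom a : OreLocalization Φ A), f a))
          (fun p : OreLocalization Φ A × B =>
            ρ p.1 - (OreLocalization.numeratorRingHom p.2 :
              OreLocalization (Φ.map (f : A →* B)) B)) ∧
        Function.Surjective
          (fun p : OreLocalization Φ A × B =>
            ρ p.1 - (OreLocalization.numeratorRingHom p.2 :
              OreLocalization (Φ.map (f : A →* B)) B))) := by
  letI : OreLocalization.OreSet Φ := oreSetOfCentral Φ hcentA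
  letI : OreLocalization.OreSet (Φ.map (f : A →* B)) :=
    oreSetOfCentral (Φ.map (f : A →* B))
      (by rintro t ⟨s, hs, rfl⟩ b; exact hcentB s hs b)
  intro ρ hρ
  have hcB : ∀ s ∈ Φ.map (f : A →* B), ∀ b : B, s * b = b * s := by
    rintro t ⟨s, hs, rfl⟩ b; exact hcentB s hs b
  have hrB : ∀ s ∈ Φ.map (f : A →* B), s ∈ nonZeroDivisors B := by
    rintro t ⟨s, hs, rfl⟩; exact hregB s hs
  have numA : ∀ a : A, (OreLocalization.numeratorRingHom a : OreLocalization Φ A)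
      = a /ₒ (1 : Φ) := fun _ => rfl
  have numB : ∀ b : B, (OreLocalization.numeratorRingHom b :
      OreLocalization (Φ.map (f : A →* B)) B) = b /ₒ (1 : Φ.map (f : A →* B)) := fun _ => rfl
  refine ⟨?_, ?_, ?_⟩
  · intro a a' h
    have h1 := (Prod.ext_iff.1 h).1
    simp only [numA] at h1
    simpa using (karoubi_div_eq Φ hcentA hregA a a' 1).1 h1
  · rintro ⟨x, b⟩
    induction x using OreLocalization.ind with
    | _ a s =>
    simp only [numA, numB, hρ, sub_eq_zero, Set.mem_range, Prod.mk.injEq]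
    rw [karoubi_div_eq _ hcB hrB]
    constructor
    · intro h
      obtain ⟨a', rfl⟩ := hmodinj s s.2 a ⟨b, h⟩
      refine ⟨a', ((karoubi_div_eq Φ hcentA hregA _ _ _).2 rfl).symm, ?_⟩
      rw [map_mul] at h
      have h3 : f s * (f a' - b) = 0 := by rw [mul_sub, sub_eq_zero]; exact h
      exact sub_eq_zero.1 ((hregB s s.2).1 _ h3)
    · rintro ⟨a', h, rfl⟩
      rw [(karoubi_div_eq Φ hcentA hregA _ _ _).1 h.symm, map_mul]
  · intro y
    induction y using OreLocalization.ind with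
    | _ b t =>
    obtain ⟨_, s, hs, rfl⟩ := t
    obtain ⟨a, b', h⟩ := hmodsurj s hs b
    refine ⟨(a /ₒ (⟨s, hs⟩ : Φ), -b'), ?_⟩
    simp only [hρ, numB]
    rw [← OreLocalization.neg_def, sub_neg_eq_add, ← (karoubi_div_eq _ hcB hrB (f s * b') b' ⟨f s, Submonoid.mem_map_of_mem (f : A →* B) hs⟩).2 rfl,
      OreLocalization.add_oreDiv, ← h, add_sub_cancel]
    rfl
end

section
/- Let A and B be rings, f : A → B a ring homomorphism, and Φ a multiplicatively closed subset of A (a submonoid containing 1) consisting of central elements of A each of which is a non-zero-divisor in A. Assume that for every s ∈ Φ, the element f(s) is central in B and a non-zero-divisor in B, and that f induces a bijection A/sA → B/f(s)B. Let λ : A → Φ⁻¹A and φ : B → f(Φ)⁻¹B be the canonical homomorphisms into the Ore localizations, and let ρ : Φ⁻¹A → f(Φ)⁻¹B be the induced homomorphism with ρ(a/s) = f(a)/f(s). Then ρ induces an isomorphism of additive abelian groups (Φ⁻¹A)/λ(A) → (f(Φ)⁻¹B)/φ(B) between the cokernel of λ and the cokernel of φ. -/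
open OreLocalization in
theorem karoubi_aux_cancel {R : Type*} [Ring R] (S : Submonoid R) [OreLocalization.OreSet S]
    (s : S) (b : R) : (((s : R) * b) /ₒ s : OreLocalization S R) = b /ₒ 1 := by
  have := OreLocalization.expand' (S := S) b 1 s
  rw [this]
  simp [Submonoid.smul_def]

open OreLocalization in
theorem karoubi_aux_eq {R : Type*} [Ring R] (S : Submonoid R) [OreLocalization.OreSet S]
    (hc : ∀ s ∈ S, ∀ a : R, s * a = a * s) (hr : ∀ s ∈ S, s ∈ nonZeroDivisors R)
    (s : S) (b c : R) (h : (b /ₒ s : OreLocalization S R) = c /ₒ 1) : b = s * c := by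
  rw [OreLocalization.oreDiv_eq_iff] at h
  obtain ⟨u, v, h1, h2⟩ := h
  simp only [Submonoid.smul_def, smul_eq_mul, OneMemClass.coe_one, mul_one] at h1 h2
  have h3 : (u : R) * (b - s * c) = 0 := by
    have : v * (b - s * c) = 0 := by
      rw [mul_sub, ← h1, ← mul_assoc, ← h2, sub_self]
    rw [h2, ← hc s s.2 v, mul_assoc, this, mul_zero]
  exact sub_eq_zero.mp ((mem_nonZeroDivisors_iff.mp (hr u u.2)).1 _ h3)

/-- In Karoubi's situation, the induced map `ρ : Φ⁻¹A → f(Φ)⁻¹B`, `a/s ↦ f(a)/f(s)`,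
induces an isomorphism of additive groups `(Φ⁻¹A)/λ(A) ≅ (f(Φ)⁻¹B)/φ(B)` between the
cokernels of the canonical maps `λ : A → Φ⁻¹A` and `φ : B → f(Φ)⁻¹B`. -/
theorem karoubi_cokernel_iso
    {A B : Type*} [Ring A] [Ring B] (f : A →+* B) (Φ : Submonoid A)
    (hcentA : ∀ s ∈ Φ, ∀ a : A, s * a = a * s)
    (hregA : ∀ s ∈ Φ, (s : A) ∈ nonZeroDivisors A)
    (hcentB : ∀ s ∈ Φ, ∀ b : B, f s * b = b * f s)
    (hregB : ∀ s ∈ Φ, f s ∈ nonZeroDivisors B)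
    (hmodsurj : ∀ s ∈ Φ, ∀ b : B, ∃ a : A, ∃ b' : B, b - f a = f s * b')
    (hmodinj : ∀ s ∈ Φ, ∀ a : A, (∃ b : B, f a = f s * b) → ∃ a' : A, a = s * a') :
    letI : OreLocalization.OreSet Φ := oreSetOfCentral Φ hcentA
    letI : OreLocalization.OreSet (Φ.map (f : A →* B)) :=
      oreSetOfCentral (Φ.map (f : A →* B))
        (by rintro t ⟨s, hs, rfl⟩ b; exact hcentB s hs b)
    ∀ ρ : OreLocalization Φ A →+* OreLocalization (Φ.map (f : A →* B)) B,
      (∀ (a : A) (s : Φ), ρ (a /ₒ s) =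
        f a /ₒ (⟨f s, Submonoid.mem_map_of_mem (f : A →* B) s.2⟩ : Φ.map (f : A →* B))) →
      ∃ e : (OreLocalization Φ A ⧸
              (OreLocalization.numeratorRingHom : A →+* OreLocalization Φ A).toAddMonoidHom.range)
            ≃+
            (OreLocalization (Φ.map (f : A →* B)) B ⧸
              (OreLocalization.numeratorRingHom :
                B →+* OreLocalization (Φ.map (f : A →* B)) B).toAddMonoidHom.range),
        ∀ x : OreLocalization Φ A,
          e (QuotientAddGroup.mk x) = QuotientAddGroup.mk (ρ x) := by
  letI i1 : OreLocalization.OreSet Φ := oreSetOfCentral Φ hcentA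
  letI i2 : OreLocalization.OreSet (Φ.map (f : A →* B)) :=
    oreSetOfCentral (Φ.map (f : A →* B))
      (by rintro t ⟨s, hs, rfl⟩ b; exact hcentB s hs b)
  intro ρ hρ
  have hcB : ∀ t ∈ Φ.map (f : A →* B), ∀ b : B, t * b = b * t := by
    rintro t ⟨s, hs, rfl⟩ b; exact hcentB s hs b
  have hrB : ∀ t ∈ Φ.map (f : A →* B), t ∈ nonZeroDivisors B := by
    rintro t ⟨s, hs, rfl⟩; exact hregB s hs
  have hone : ∀ a : A, ρ (OreLocalization.oreDiv a (1 : Φ)) =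
      OreLocalization.oreDiv (f a) (1 : Φ.map (f : A →* B)) := by
    intro a
    rw [hρ]
    congr 1
    exact Subtype.ext (map_one f)
  have hle : (OreLocalization.numeratorRingHom : A →+* OreLocalization Φ A).toAddMonoidHom.range ≤
      ((OreLocalization.numeratorRingHom :
        B →+* OreLocalization (Φ.map (f : A →* B)) B).toAddMonoidHom.range).comap
          ρ.toAddMonoidHom := by
    rintro _ ⟨a, rfl⟩
    exact ⟨f a, (hone a).symm⟩
  refine ⟨AddEquiv.ofBijective (QuotientAddGroup.map _ _ ρ.toAddMonoidHom hle) ⟨?_, ?_⟩,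
    fun x => rfl⟩
  · rw [injective_iff_map_eq_zero]
    intro q
    induction q using QuotientAddGroup.induction_on with
    | H x =>
      intro hx
      induction x using OreLocalization.ind with
      | _ a s =>
        have hx' := (QuotientAddGroup.eq_zero_iff _).mp hx
        obtain ⟨b, hb⟩ := hx'
        have hb' : OreLocalization.oreDiv b (1 : Φ.map (f : A →* B)) = _ := hb.trans (hρ a s)
        have h := karoubi_aux_eq _ hcB hrB _ _ _ hb'.symm
        obtain ⟨a', rfl⟩ := hmodinj s s.2 a ⟨b, h⟩
        rw [QuotientAddGroup.eq_zero_iff]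
        exact ⟨a', (karoubi_aux_cancel Φ s a').symm⟩
  · intro q
    induction q using QuotientAddGroup.induction_on with
    | H y =>
      induction y using OreLocalization.ind with
      | _ b t =>
        obtain ⟨t, s, hs, rfl⟩ := t
        obtain ⟨a, b', h⟩ := hmodsurj s hs b
        refine ⟨QuotientAddGroup.mk (OreLocalization.oreDiv a (⟨s, hs⟩ : Φ)), ?_⟩
        refine (QuotientAddGroup.eq (s := (OreLocalization.numeratorRingHom :
          B →+* OreLocalization (Φ.map (f : A →* B)) B).toAddMonoidHom.range)).mpr ⟨b', ?_⟩
        refine (karoubi_aux_cancel (Φ.map (f : A →* B))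
          ⟨f s, Submonoid.mem_map_of_mem (f : A →* B) hs⟩ b').symm.trans ?_
        refine Eq.trans ?_ (congrArg (fun z => -z + _) (hρ a ⟨s, hs⟩).symm)
        rw [eq_neg_add_iff_add_eq, OreLocalization.add_oreDiv]
        change OreLocalization.oreDiv (f a + f s * b') _ = _
        rw [← h, add_sub_cancel]
        rfl
end

section
/- Let R be a ring and H, G groups, with identity elements e_H and e_G. Let F be the free left R-module on the set H × G (formal finite sums Σ r_{(h,g)} (h,g) with r_{(h,g)} ∈ R), equipped with the multiplication determined by biadditivity and the rules (r (h,g)) · (r' (h',g')) = r r' ((h, g g') + (h h', g') − (h, g')) for r, r' ∈ R, h, h' ∈ H, g, g' ∈ G. Then this multiplication is associative and (e_H, e_G) is a two-sided multiplicative identity, so F is a ring; moreover, the map R → F, r ↦ r (e_H, e_G), is an injective ring homomorphism and r (h,g) = (h,g) r holds in F for all r ∈ R, h ∈ H, g ∈ G. -/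
/-- The multiplication of the noncommutative tensor product `RH ⊠_R RG`: on the free left
`R`-module on `H × G` it is determined by biadditivity and the rule
`(r (h,g)) · (r' (h',g')) = r r' ((h, g g') + (h h', g') − (h, g'))`. -/
noncomputable def ncMul {R : Type*} [Ring R] {H G : Type*} [Group H] [Group G]
    (x y : (H × G) →₀ R) : (H × G) →₀ R :=
  x.sum fun p r => y.sum fun q s =>
    (r * s) • (Finsupp.single (p.1, p.2 * q.2) (1 : R)
      + Finsupp.single (p.1 * q.1, q.2) (1 : R) - Finsupp.single (p.1, q.2) (1 : R))

section helpers
variable {R : Type*} [Ring R] {H G : Type*} [Group H] [Group G]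

theorem ncMul_add_right' (x y z : (H × G) →₀ R) :
    ncMul x (y + z) = ncMul x y + ncMul x z := by
  unfold ncMul
  rw [← Finsupp.sum_add]
  refine Finsupp.sum_congr fun p _ => ?_
  exact Finsupp.sum_add_index' (fun q => by simp) (fun q a b => by rw [mul_add, add_smul])

theorem ncMul_add_left' (x y z : (H × G) →₀ R) :
    ncMul (x + y) z = ncMul x z + ncMul y z := by
  unfold ncMul
  refine Finsupp.sum_add_index' (fun q => by simp) (fun q a b => ?_)
  rw [← Finsupp.sum_add]
  exact Finsupp.sum_congr fun p _ => by rw [add_mul, add_smul]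

theorem ncMul_zero_left' (y : (H × G) →₀ R) : ncMul 0 y = 0 := by
  simp [ncMul]

theorem ncMul_zero_right' (y : (H × G) →₀ R) : ncMul y 0 = 0 := by
  simp [ncMul]

theorem ncMul_sub_left' (x y z : (H × G) →₀ R) :
    ncMul (x - y) z = ncMul x z - ncMul y z := by
  rw [eq_sub_iff_add_eq, ← ncMul_add_left', sub_add_cancel]

theorem ncMul_sub_right' (x y z : (H × G) →₀ R) :
    ncMul x (y - z) = ncMul x y - ncMul x z := by
  rw [eq_sub_iff_add_eq, ← ncMul_add_right', sub_add_cancel]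

theorem ncMul_single' (h h' : H) (g g' : G) (r s : R) :
    ncMul (Finsupp.single (h, g) r) (Finsupp.single (h', g') s) =
      Finsupp.single (h, g * g') (r * s) + Finsupp.single (h * h', g') (r * s)
        - Finsupp.single (h, g') (r * s) := by
  unfold ncMul
  rw [Finsupp.sum_single_index (by simp), Finsupp.sum_single_index (by simp)]
  simp [smul_sub, smul_add]

theorem ncMul_assoc' (x y z : (H × G) →₀ R) :
    ncMul (ncMul x y) z = ncMul x (ncMul y z) := by
  induction x using Finsupp.induction_linear with
  | zero => simp only [ncMul_zero_left']
  | add a b ha hb => simp only [ncMul_add_left', ha, hb]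
  | single p r =>
    induction y using Finsupp.induction_linear with
    | zero => simp only [ncMul_zero_left', ncMul_zero_right']
    | add a b ha hb => simp only [ncMul_add_left', ncMul_add_right', ha, hb]
    | single q s =>
      induction z using Finsupp.induction_linear with
      | zero => simp only [ncMul_zero_right']
      | add a b ha hb => simp only [ncMul_add_right', ha, hb]
      | single t u =>
        obtain ⟨h, g⟩ := p
        obtain ⟨h', g'⟩ := q
        obtain ⟨h'', g''⟩ := t
        simp only [ncMul_single', ncMul_add_left', ncMul_add_right', ncMul_sub_left',
          ncMul_sub_right', mul_assoc]
        abel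

theorem ncMul_one_left' (x : (H × G) →₀ R) :
    ncMul (Finsupp.single ((1 : H), (1 : G)) (1 : R)) x = x := by
  induction x using Finsupp.induction_linear with
  | zero => simp only [ncMul_zero_right']
  | add a b ha hb => simp only [ncMul_add_right', ha, hb]
  | single p r =>
    obtain ⟨h, g⟩ := p
    simp [ncMul_single']

theorem ncMul_one_right' (x : (H × G) →₀ R) :
    ncMul x (Finsupp.single ((1 : H), (1 : G)) (1 : R)) = x := by
  induction x using Finsupp.induction_linear with
  | zero => simp only [ncMul_zero_left']
  | add a b ha hb => simp only [ncMul_add_left', ha, hb]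
  | single p r =>
    obtain ⟨h, g⟩ := p
    simp [ncMul_single']

end helpers

/-- The free left `R`-module `F` on `H × G`, equipped with the multiplication `ncMul`, is an
associative unital ring with identity `(e_H, e_G)`; the map `R → F`, `r ↦ r (e_H, e_G)`, is an
injective ring homomorphism, and `r (h,g) = (h,g) r` holds in `F`. -/
theorem ncTensor_is_ring (R : Type*) [Ring R] (H G : Type*) [Group H] [Group G] :
    (∀ x y z : (H × G) →₀ R, ncMul (ncMul x y) z = ncMul x (ncMul y z)) ∧
    (∀ x y z : (H × G) →₀ R, ncMul x (y + z) = ncMul x y + ncMul x z) ∧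
    (∀ x y z : (H × G) →₀ R, ncMul (x + y) z = ncMul x z + ncMul y z) ∧
    (∀ x : (H × G) →₀ R,
      ncMul (Finsupp.single ((1 : H), (1 : G)) (1 : R)) x = x ∧
      ncMul x (Finsupp.single ((1 : H), (1 : G)) (1 : R)) = x) ∧
    (Function.Injective (fun r : R => Finsupp.single ((1 : H), (1 : G)) r)) ∧
    (∀ r r' : R, (Finsupp.single ((1 : H), (1 : G)) (r + r') : (H × G) →₀ R) =
      Finsupp.single ((1 : H), (1 : G)) r + Finsupp.single ((1 : H), (1 : G)) r') ∧
    (∀ r r' : R, (Finsupp.single ((1 : H), (1 : G)) (r * r') : (H × G) →₀ R) =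
      ncMul (Finsupp.single ((1 : H), (1 : G)) r) (Finsupp.single ((1 : H), (1 : G)) r')) ∧
    (∀ (r : R) (h : H) (g : G),
      ncMul (Finsupp.single ((1 : H), (1 : G)) r) (Finsupp.single (h, g) (1 : R)) =
      ncMul (Finsupp.single (h, g) (1 : R)) (Finsupp.single ((1 : H), (1 : G)) r)) := by
  refine ⟨ncMul_assoc', ncMul_add_right', ncMul_add_left',
    fun x => ⟨ncMul_one_left' x, ncMul_one_right' x⟩, Finsupp.single_injective _,
    fun r r' => Finsupp.single_add _ _ _, fun r r' => ?_, fun r h g => ?_⟩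
  · simp [ncMul_single']
  · simp [ncMul_single']
end

section
/- Let R ⊆ S be an extension of rings (R is a subring of S containing the identity of S). Regard S as a left R-module by multiplication, let Q := S/R be the quotient left R-module of S by the R-submodule R·1 = R, and let π : S → Q be the canonical projection. Let S' := End_R(Q) be the ring of left R-linear endomorphisms of Q, and for r ∈ R let ρ_r ∈ S' be the endomorphism induced by right multiplication by r (well defined since Rr ⊆ R). Then the sequence of additive abelian groups 0 → R → S ⊕ S' → Hom_R(S, Q) → 0 is exact, where the first map is r ↦ (r, ρ_r) and the second map sends (s, f) to the left R-linear map x ↦ π(xs) − f(π(x)). -/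
/-- Right multiplication by `s : S` as a homomorphism of left `R`-modules, for a subring
`R` of `S`. -/
def rmulLin {S : Type*} [Ring S] (R : Subring S) (s : S) : S →ₗ[R] S where
  toFun x := x * s
  map_add' x y := add_mul x y s
  map_smul' r x := by
    simp only [RingHom.id_apply, Subring.smul_def, smul_eq_mul, mul_assoc]

/-- The endomorphism of `Q = S/R` induced by right multiplication by `r ∈ R`. -/
def rhoEnd {S : Type*} [Ring S] (R : Subring S) (r : R) :
    Module.End R (S ⧸ Submodule.span R {(1 : S)}) :=
  Submodule.mapQ _ _ (rmulLin R (r : S)) (by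
    rw [Submodule.span_le]
    intro x hx
    rw [Set.mem_singleton_iff] at hx
    subst hx
    simp only [SetLike.mem_coe, Submodule.mem_comap]
    show (1 : S) * (r : S) ∈ Submodule.span R {(1 : S)}
    rw [one_mul]
    have : r • (1 : S) = (r : S) := by simp [Subring.smul_def]
    rw [← this]
    exact Submodule.smul_mem _ r (Submodule.mem_span_singleton_self 1))

/-- For an extension of rings `R ⊆ S`, with `Q := S/R`, `π : S → Q` the projection and
`S' := End_R(Q)`, the sequence of additive groups `0 → R → S ⊕ S' → Hom_R(S, Q) → 0` is
exact, where the first map is `r ↦ (r, ρ_r)` (with `ρ_r` induced by right multiplication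
by `r`), and the second map sends `(s, f)` to `x ↦ π(xs) − f(π(x))`. -/
theorem ring_extension_exact_context {S : Type*} [Ring S] (R : Subring S) :
    Function.Injective
      (fun r : R => ((r : S), rhoEnd R r)) ∧
    Function.Exact
      (fun r : R => ((r : S), rhoEnd R r))
      (fun sf : S × Module.End R (S ⧸ Submodule.span R {(1 : S)}) =>
        (Submodule.span R {(1 : S)}).mkQ.comp (rmulLin R sf.1)
          - sf.2.comp (Submodule.span R {(1 : S)}).mkQ) ∧
    Function.Surjective
      (fun sf : S × Module.End R (S ⧸ Submodule.span R {(1 : S)}) =>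
        (Submodule.span R {(1 : S)}).mkQ.comp (rmulLin R sf.1)
          - sf.2.comp (Submodule.span R {(1 : S)}).mkQ) := by
  refine ⟨fun a b h => Subtype.ext (congrArg Prod.fst h), ?_, ?_⟩
  · rintro ⟨s, f⟩
    constructor
    · intro h
      have h' : ∀ x : S, (Submodule.span R {(1 : S)}).mkQ (x * s)
          = f ((Submodule.span R {(1 : S)}).mkQ x) := fun x =>
        sub_eq_zero.mp (LinearMap.congr_fun h x)
      have h1 : (Submodule.span R {(1 : S)}).mkQ (1 : S) = 0 := by
        rw [Submodule.mkQ_apply, Submodule.Quotient.mk_eq_zero]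
        exact Submodule.mem_span_singleton_self 1
      have hs := h' 1
      rw [h1, map_zero, one_mul, Submodule.mkQ_apply, Submodule.Quotient.mk_eq_zero,
        Submodule.mem_span_singleton] at hs
      obtain ⟨r, hr⟩ := hs
      have hr' : (r : S) = s := by
        rw [← hr, Subring.smul_def, smul_eq_mul, mul_one]
      subst hr'
      refine ⟨r, Prod.ext rfl ?_⟩
      apply Submodule.linearMap_qext
      ext x
      exact h' x
    · rintro ⟨r, hr⟩
      have h1 : (r : S) = s := congrArg Prod.fst hr
      have h2 : rhoEnd R r = f := congrArg Prod.snd hr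
      subst h1
      subst h2
      apply LinearMap.ext
      intro x
      exact sub_self ((Submodule.span R {(1 : S)}).mkQ (x * (r : S)))
  · intro g
    obtain ⟨s, hs⟩ := (Submodule.span R {(1 : S)}).mkQ_surjective (g 1)
    refine ⟨(s, (Submodule.span R {(1 : S)}).liftQ
      ((Submodule.span R {(1 : S)}).mkQ.comp (rmulLin R s) - g) ?_), ?_⟩
    · rw [Submodule.span_le]
      intro x hx
      rw [Set.mem_singleton_iff] at hx
      subst hx
      show (Submodule.span R {(1 : S)}).mkQ ((1 : S) * s) - g 1 = 0
      rw [one_mul, hs, sub_self]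
    · apply LinearMap.ext
      intro x
      exact sub_sub_cancel ((Submodule.span R {(1 : S)}).mkQ (x * s)) (g x)
end

section
/- Let R, C, D be rings, α : R → C and β : R → D injective unital ring homomorphisms, X a two-sided ideal of C and Y a two-sided ideal of D such that additively C = α(R) ⊕ X and D = β(R) ⊕ Y (i.e. α(R) ∩ X = 0 and α(R) + X = C, and similarly for D). Let r_C : C → R and r_D : D → R be the additive maps determined by c − α(r_C(c)) ∈ X and d − β(r_D(d)) ∈ Y. On the product additive group M := C × Y define a multiplication by (c₁, y₁)(c₂, y₂) := (c₁c₂, β(r_C(c₁))·y₂ + y₁·β(r_C(c₂)) + y₁y₂). Then this multiplication is associative and biadditive with two-sided identity (1, 0), so M is a ring; moreover, the maps C → M, c ↦ (c, 0), and D → M, d ↦ (α(r_D(d)), d − β(r_D(d))), are injective ring homomorphisms. -/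
/-- The multiplication of the ring `M = C × Y` built from two strictly pure extensions
`α : R → C` (with ideal complement `X`) and `β : R → D` (with ideal complement `Y`):
`(c₁, y₁)(c₂, y₂) := (c₁c₂, β(r_C(c₁))·y₂ + y₁·β(r_C(c₂)) + y₁y₂)`. -/
def pureMul {R C D : Type*} [Ring R] [Ring C] [Ring D] (β : R →+* D)
    (rC : C → R) (Y : TwoSidedIdeal D) (p q : C × Y) : C × Y :=
  (p.1 * q.1,
    ⟨β (rC p.1) * (q.2 : D) + (p.2 : D) * β (rC q.1) + (p.2 : D) * (q.2 : D),
      Y.add_mem (Y.add_mem (Y.mul_mem_left _ _ q.2.2) (Y.mul_mem_right _ _ p.2.2))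
        (Y.mul_mem_right _ _ p.2.2)⟩)

/-- Uniqueness of the retraction, packaged as its ring homomorphism laws. -/
theorem retr_laws {R C : Type*} [Ring R] [Ring C] (α : R →+* C) (hα : Function.Injective α)
    (X : TwoSidedIdeal C) (hd : ∀ r : R, α r ∈ X → α r = 0) (rC : C → R)
    (hr : ∀ c : C, c - α (rC c) ∈ X) :
    (∀ r, rC (α r) = r) ∧ rC 1 = 1 ∧ (∀ a b, rC (a + b) = rC a + rC b) ∧
      (∀ a b, rC (a * b) = rC a * rC b) := by
  have key : ∀ c r, c - α r ∈ X → rC c = r := by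
    intro c r h
    have h2 := X.sub_mem h (hr c)
    have h3 : c - α r - (c - α (rC c)) = α (rC c - r) := by rw [map_sub]; abel
    rw [h3] at h2
    have h4 := hd _ h2
    rw [← map_zero α] at h4
    exact sub_eq_zero.mp (hα h4)
  refine ⟨fun r => key _ _ ?_, key _ _ ?_, fun a b => key _ _ ?_, fun a b => key _ _ ?_⟩
  · rw [sub_self]; exact X.zero_mem
  · rw [map_one, sub_self]; exact X.zero_mem
  · have h := X.add_mem (hr a) (hr b)
    rw [map_add]
    convert h using 1
    abel
  · have h := X.add_mem (X.mul_mem_right _ b (hr a)) (X.mul_mem_left (α (rC a)) _ (hr b))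
    rw [map_mul]
    convert h using 1
    noncomm_ring

/-- Given strictly pure extensions `α : R → C`, `β : R → D` with ideal complements `X`, `Y`
and retractions `r_C`, `r_D`, the multiplication `pureMul` on `M := C × Y` is biadditive and
associative with two-sided identity `(1, 0)`, so `M` is a ring; moreover `c ↦ (c, 0)` and
`d ↦ (α(r_D d), d − β(r_D d))` are injective ring homomorphisms `C → M` and `D → M`. -/
theorem strictly_pure_ncTensor_is_ring
    {R C D : Type*} [Ring R] [Ring C] [Ring D]
    (α : R →+* C) (β : R →+* D) (hα : Function.Injective α) (hβ : Function.Injective β)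
    (X : TwoSidedIdeal C) (Y : TwoSidedIdeal D)
    (hdisjC : ∀ r : R, α r ∈ X → α r = 0) (hdisjD : ∀ r : R, β r ∈ Y → β r = 0)
    (rC : C → R) (rD : D → R)
    (hrC : ∀ c : C, c - α (rC c) ∈ X) (hrD : ∀ d : D, d - β (rD d) ∈ Y) :
    (∀ p q u : C × Y, pureMul β rC Y (pureMul β rC Y p q) u =
      pureMul β rC Y p (pureMul β rC Y q u)) ∧
    (∀ p q u : C × Y, pureMul β rC Y p (q + u) = pureMul β rC Y p q + pureMul β rC Y p u) ∧
    (∀ p q u : C × Y, pureMul β rC Y (p + q) u = pureMul β rC Y p u + pureMul β rC Y q u) ∧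
    (∀ p : C × Y, pureMul β rC Y (((1 : C), (0 : Y))) p = p ∧
      pureMul β rC Y p (((1 : C), (0 : Y))) = p) ∧
    (Function.Injective (fun c : C => ((c, (0 : Y)) : C × Y))) ∧
    (∀ c c' : C, ((c + c', (0 : Y)) : C × Y) = (c, (0 : Y)) + (c', (0 : Y))) ∧
    ((((1 : C), (0 : Y)) : C × Y) = ((1 : C), (0 : Y))) ∧
    (∀ c c' : C, ((c * c', (0 : Y)) : C × Y) =
      pureMul β rC Y ((c, (0 : Y)) : C × Y) ((c', (0 : Y)) : C × Y)) ∧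
    (Function.Injective
      (fun d : D => ((α (rD d), ⟨d - β (rD d), hrD d⟩) : C × Y))) ∧
    (∀ d d' : D, ((α (rD (d + d')), ⟨d + d' - β (rD (d + d')), hrD _⟩) : C × Y) =
      (α (rD d), ⟨d - β (rD d), hrD d⟩) + (α (rD d'), ⟨d' - β (rD d'), hrD d'⟩)) ∧
    (((α (rD 1), ⟨1 - β (rD 1), hrD 1⟩) : C × Y) = (((1 : C), (0 : Y)) : C × Y)) ∧
    (∀ d d' : D, ((α (rD (d * d')), ⟨d * d' - β (rD (d * d')), hrD _⟩) : C × Y) =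
      pureMul β rC Y ((α (rD d), ⟨d - β (rD d), hrD d⟩) : C × Y)
        ((α (rD d'), ⟨d' - β (rD d'), hrD d'⟩) : C × Y)) := by
  obtain ⟨cα, c1, cadd, cmul⟩ := retr_laws α hα X hdisjC rC hrC
  obtain ⟨dβ, d1, dadd, dmul⟩ := retr_laws β hβ Y hdisjD rD hrD
  refine ⟨?_, ?_, ?_, ?_, ?_, ?_, rfl, ?_, ?_, ?_, ?_, ?_⟩
  · rintro ⟨a, x, hx⟩ ⟨b, y, hy⟩ ⟨c, z, hz⟩
    refine Prod.ext (mul_assoc a b c) (Subtype.ext ?_)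
    simp only [pureMul, cmul, map_mul]
    noncomm_ring
  · rintro ⟨a, x, hx⟩ ⟨b, y, hy⟩ ⟨c, z, hz⟩
    refine Prod.ext (mul_add a b c) (Subtype.ext ?_)
    change β (rC a) * (y + z) + x * β (rC (b + c)) + x * (y + z) =
      (β (rC a) * y + x * β (rC b) + x * y) + (β (rC a) * z + x * β (rC c) + x * z)
    simp only [cadd, map_add]
    noncomm_ring
  · rintro ⟨a, x, hx⟩ ⟨b, y, hy⟩ ⟨c, z, hz⟩
    refine Prod.ext (add_mul a b c) (Subtype.ext ?_)
    change β (rC (a + b)) * z + (x + y) * β (rC c) + (x + y) * z =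
      (β (rC a) * z + x * β (rC c) + x * z) + (β (rC b) * z + y * β (rC c) + y * z)
    simp only [cadd, map_add]
    noncomm_ring
  · rintro ⟨a, x, hx⟩
    constructor
    · refine Prod.ext (one_mul a) (Subtype.ext ?_)
      change β (rC 1) * x + 0 * β (rC a) + 0 * x = x
      simp [c1]
    · refine Prod.ext (mul_one a) (Subtype.ext ?_)
      change β (rC a) * 0 + x * β (rC 1) + x * 0 = x
      simp [c1]
  · intro a b h
    exact congrArg Prod.fst h
  · intro a b
    exact Prod.ext rfl (add_zero (0 : Y)).symm
  · intro a b
    refine Prod.ext rfl (Subtype.ext ?_)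
    change (0 : D) = β (rC a) * 0 + 0 * β (rC b) + 0 * 0
    simp
  · intro a b h
    have h1 : rD a = rD b := hα (congrArg Prod.fst h)
    have h2 : a - β (rD a) = b - β (rD b) := congrArg (fun t : C × Y => (t.2 : D)) h
    rw [h1] at h2
    exact sub_left_injective h2
  · intro a b
    refine Prod.ext ?_ (Subtype.ext ?_)
    · change α (rD (a + b)) = α (rD a) + α (rD b)
      rw [dadd, map_add]
    · change a + b - β (rD (a + b)) = (a - β (rD a)) + (b - β (rD b))
      rw [dadd, map_add]
      abel
  · refine Prod.ext ?_ (Subtype.ext ?_)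
    · change α (rD 1) = 1
      rw [d1, map_one]
    · change 1 - β (rD 1) = 0
      rw [d1, map_one, sub_self]
  · intro a b
    refine Prod.ext ?_ (Subtype.ext ?_)
    · change α (rD (a * b)) = α (rD a) * α (rD b)
      rw [dmul, map_mul]
    · simp only [pureMul, cα, dmul, map_mul]
      noncomm_ring
end

section
/- Let R, C, D be rings, α : R → C and β : R → D injective unital ring homomorphisms, X a two-sided ideal of C and Y a two-sided ideal of D such that additively C = α(R) ⊕ X and D = β(R) ⊕ Y (i.e. α(R) ∩ X = 0 and α(R) + X = C, and similarly for D). Let r_D : D → R be the additive map determined by d − β(r_D(d)) ∈ Y. Then the sequence of additive abelian groups 0 → R → C ⊕ D → C × Y → 0 is exact, where the first map is r ↦ (α(r), β(r)) and the second map is (c, d) ↦ (c − α(r_D(d)), −(d − β(r_D(d)))). -/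
/-- Given two strictly pure extensions `α : R → C` and `β : R → D`, with two-sided ideal
complements `X ⊆ C` and `Y ⊆ D` and retractions `r_C : C → R`, `r_D : D → R`, the sequence
of additive groups `0 → R → C ⊕ D → C × Y → 0` is exact, where the first map is
`r ↦ (α r, β r)` and the second map is `(c, d) ↦ (c − α(r_D d), −(d − β(r_D d)))`. -/
theorem strictly_pure_exact_sequence
    {R C D : Type*} [Ring R] [Ring C] [Ring D]
    (α : R →+* C) (β : R →+* D) (hα : Function.Injective α) (hβ : Function.Injective β)
    (X : TwoSidedIdeal C) (Y : TwoSidedIdeal D)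
    (hdisjC : ∀ r : R, α r ∈ X → α r = 0) (hdisjD : ∀ r : R, β r ∈ Y → β r = 0)
    (rC : C → R) (rD : D → R)
    (hrC : ∀ c : C, c - α (rC c) ∈ X) (hrD : ∀ d : D, d - β (rD d) ∈ Y) :
    Function.Injective (fun r : R => ((α r, β r) : C × D)) ∧
    Function.Exact
      (fun r : R => ((α r, β r) : C × D))
      (fun p : C × D =>
        ((p.1 - α (rD p.2), ⟨-(p.2 - β (rD p.2)), Y.neg_mem (hrD p.2)⟩) : C × Y)) ∧
    Function.Surjective
      (fun p : C × D =>
        ((p.1 - α (rD p.2), ⟨-(p.2 - β (rD p.2)), Y.neg_mem (hrD p.2)⟩) : C × Y)) := by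
  have key : ∀ (d : D) (r : R), d - β r ∈ Y → rD d = r := by
    intro d r h
    have h1 : β (r - rD d) ∈ Y := by
      have h2 := Y.sub_mem (hrD d) h
      have e : d - β (rD d) - (d - β r) = β (r - rD d) := by
        rw [map_sub]; abel
      rwa [e] at h2
    have h3 := hdisjD _ h1
    rw [map_sub, sub_eq_zero] at h3
    exact (hβ h3).symm
  refine ⟨?_, ?_, ?_⟩
  · intro a b h
    exact hα (congrArg Prod.fst h)
  · rintro ⟨c, d⟩
    constructor
    · intro h
      have h1 : c - α (rD d) = 0 := congrArg Prod.fst h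
      have h2 : -(d - β (rD d)) = 0 := congrArg (fun q : C × Y => (q.2 : D)) h
      rw [neg_eq_zero] at h2
      exact ⟨rD d, Prod.ext (sub_eq_zero.mp h1).symm (sub_eq_zero.mp h2).symm⟩
    · rintro ⟨r, h⟩
      have h1 : α r = c := congrArg Prod.fst h
      have h2 : β r = d := congrArg Prod.snd h
      have h3 : rD d = r := key d r (by rw [h2, sub_self]; exact Y.zero_mem)
      refine Prod.ext ?_ (Subtype.ext ?_)
      · change c - α (rD d) = 0
        rw [h3, h1, sub_self]
      · change -(d - β (rD d)) = 0
        rw [h3, h2, sub_self, neg_zero]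
  · rintro ⟨c, y, hy⟩
    have h3 : rD (-y) = 0 := key (-y) 0 (by
      rw [map_zero, sub_zero]; exact Y.neg_mem hy)
    refine ⟨(c, -y), Prod.ext ?_ (Subtype.ext ?_)⟩
    · change c - α (rD (-y)) = c
      rw [h3, map_zero, sub_zero]
    · change -(-y - β (rD (-y))) = y
      rw [h3, map_zero, sub_zero, neg_neg]
end
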